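/- arXiv:hep-th/9910265 — 5 statements merged into one kernel-verified Lean document; each statement's English description precedes it below -/
import Mathlib

section
/- Let ħ > 0, let N be an integer, let t : ℂ → ℂ, and let c₊, c₋ : ℂ → ℂ satisfy the Baxter equation t(γ)·c(γ) = i^{−N}·c(γ+iħ) + i^{N}·c(γ−iħ) for all γ ∈ ℂ. Define the Wronskian W(γ) = c₊(γ)·c₋(γ+iħ) − c₊(γ+iħ)·c₋(γ). Then W(γ+iħ) = (−1)^N · W(γ) for all γ ∈ ℂ. -/
/-- The Wronskian (wr1) of two solutions of the Baxter equation. -/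
noncomputable def baxterWronskian (hbar : ℝ) (cp cm : ℂ → ℂ) (γ : ℂ) : ℂ :=
  cp γ * cm (γ + Complex.I * (hbar : ℂ)) - cp (γ + Complex.I * (hbar : ℂ)) * cm γ

/-- Equation (wr2): quasi-periodicity of the Wronskian of two solutions of the
Baxter equation (fb2). -/
theorem baxterWronskian_shift (hbar : ℝ) (hhbar : 0 < hbar) (N : ℤ) (t cp cm : ℂ → ℂ)
    (hp : ∀ γ : ℂ, t γ * cp γ =
      Complex.I ^ (-N) * cp (γ + Complex.I * (hbar : ℂ)) +
      Complex.I ^ N * cp (γ - Complex.I * (hbar : ℂ)))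
    (hm : ∀ γ : ℂ, t γ * cm γ =
      Complex.I ^ (-N) * cm (γ + Complex.I * (hbar : ℂ)) +
      Complex.I ^ N * cm (γ - Complex.I * (hbar : ℂ))) :
    ∀ γ : ℂ, baxterWronskian hbar cp cm (γ + Complex.I * (hbar : ℂ))
      = (-1 : ℂ) ^ N * baxterWronskian hbar cp cm γ := by
  intro γ
  have h1 := hp (γ + Complex.I * (hbar : ℂ))
  have h2 := hm (γ + Complex.I * (hbar : ℂ))
  rw [add_sub_cancel_right] at h1 h2
  have hab : Complex.I ^ N * Complex.I ^ (-N) = 1 := by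
    rw [← zpow_add₀ Complex.I_ne_zero, add_neg_cancel, zpow_zero]
  have hsq : (-1 : ℂ) ^ N = Complex.I ^ N * Complex.I ^ N := by
    rw [← mul_zpow, Complex.I_mul_I]
  unfold baxterWronskian
  rw [hsq]
  generalize Complex.I ^ N = a at *
  generalize Complex.I ^ (-N) = b at *
  generalize γ + Complex.I * (hbar : ℂ) = g at *
  generalize g + Complex.I * (hbar : ℂ) = k at *
  linear_combination (-a * cp g) * h2 + (a * cm g) * h1 - (cp g * cm k - cp k * cm g) * hab
end

section
/- Let ħ > 0, let N be an integer, let t : ℂ → ℂ, and let c₊, c₋ : ℂ → ℂ satisfy t(γ)·c(γ) = i^{−N}·c(γ+iħ) + i^{N}·c(γ−iħ) for all γ ∈ ℂ. Define W(γ) = c₊(γ)·c₋(γ+iħ) − c₊(γ+iħ)·c₋(γ). Suppose W(δ) = 0 for some δ ∈ ℂ. Then W(δ + iħn) = 0 for every integer n; moreover, if in addition c₋(δ + iħn) ≠ 0 for every integer n, then the ratio c₊(δ+iħn)/c₋(δ+iħn) is independent of n ∈ ℤ, i.e. c₊(δ+iħn)/c₋(δ+iħn) = c₊(δ)/c₋(δ)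 for all n ∈ ℤ. -/
/-- Vanishing of the Wronskian at one point `δ` propagates to the whole lattice
`δ + iħℤ`, making the constant `ξ = c₊/c₋` of the quantization condition (q1)
well defined along it. -/
theorem baxterWronskian_lattice_zero (hbar : ℝ) (hhbar : 0 < hbar) (N : ℤ)
    (t cp cm : ℂ → ℂ)
    (hp : ∀ γ : ℂ, t γ * cp γ =
      Complex.I ^ (-N) * cp (γ + Complex.I * (hbar : ℂ)) +
      Complex.I ^ N * cp (γ - Complex.I * (hbar : ℂ)))
    (hm : ∀ γ : ℂ, t γ * cm γ =
      Complex.I ^ (-N) * cm (γ + Complex.I * (hbar : ℂ)) +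
      Complex.I ^ N * cm (γ - Complex.I * (hbar : ℂ)))
    (δ : ℂ) (hδ : baxterWronskian hbar cp cm δ = 0) :
    (∀ n : ℤ, baxterWronskian hbar cp cm (δ + Complex.I * (hbar : ℂ) * (n : ℂ)) = 0) ∧
    ((∀ n : ℤ, cm (δ + Complex.I * (hbar : ℂ) * (n : ℂ)) ≠ 0) →
      ∀ n : ℤ, cp (δ + Complex.I * (hbar : ℂ) * (n : ℂ)) /
          cm (δ + Complex.I * (hbar : ℂ) * (n : ℂ)) = cp δ / cm δ) := by
  have key : ∀ γ : ℂ, Complex.I ^ (-N) * baxterWronskian hbar cp cm (γ + Complex.I * (hbar : ℂ)) =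
      Complex.I ^ N * baxterWronskian hbar cp cm γ := by
    intro γ
    have h1 := hp (γ + Complex.I * (hbar : ℂ))
    have h2 := hm (γ + Complex.I * (hbar : ℂ))
    rw [add_sub_cancel_right] at h1 h2
    unfold baxterWronskian
    linear_combination cm (γ + Complex.I * (hbar : ℂ)) * h1 - cp (γ + Complex.I * (hbar : ℂ)) * h2
  have ha : Complex.I ^ (-N) ≠ 0 := zpow_ne_zero _ Complex.I_ne_zero
  have hb : Complex.I ^ N ≠ 0 := zpow_ne_zero _ Complex.I_ne_zero
  have shift : ∀ n : ℤ, δ + Complex.I * (hbar : ℂ) * ((n + 1 : ℤ) : ℂ) =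
      δ + Complex.I * (hbar : ℂ) * (n : ℂ) + Complex.I * (hbar : ℂ) := by
    intro n
    push_cast
    ring
  have step : ∀ n : ℤ,
      baxterWronskian hbar cp cm (δ + Complex.I * (hbar : ℂ) * ((n + 1 : ℤ) : ℂ)) = 0 ↔
      baxterWronskian hbar cp cm (δ + Complex.I * (hbar : ℂ) * (n : ℂ)) = 0 := by
    intro n
    have h := key (δ + Complex.I * (hbar : ℂ) * (n : ℂ))
    rw [← shift] at h
    constructor
    · intro h0
      rw [h0, mul_zero] at h
      exact (mul_eq_zero.mp h.symm).resolve_left hb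
    · intro h0
      rw [h0, mul_zero] at h
      exact (mul_eq_zero.mp h).resolve_left ha
  have hW : ∀ n : ℤ, baxterWronskian hbar cp cm (δ + Complex.I * (hbar : ℂ) * (n : ℂ)) = 0 := by
    intro n
    induction n using Int.induction_on with
    | zero => simpa using hδ
    | succ k ih => exact (step _).mpr ih
    | pred k ih =>
      apply (step _).mp
      rw [sub_add_cancel]
      exact ih
  refine ⟨hW, fun hne => ?_⟩
  have rat : ∀ n : ℤ, cp (δ + Complex.I * (hbar : ℂ) * ((n + 1 : ℤ) : ℂ)) /
      cm (δ + Complex.I * (hbar : ℂ) * ((n + 1 : ℤ) : ℂ)) =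
      cp (δ + Complex.I * (hbar : ℂ) * (n : ℂ)) / cm (δ + Complex.I * (hbar : ℂ) * (n : ℂ)) := by
    intro n
    rw [div_eq_div_iff (hne _) (hne _)]
    have h := hW n
    unfold baxterWronskian at h
    rw [← shift] at h
    linear_combination -h
  intro n
  induction n using Int.induction_on with
  | zero => simp
  | succ k ih => exact (rat _).trans ih
  | pred k ih =>
    have h := rat (-(k : ℤ) - 1)
    rw [sub_add_cancel] at h
    exact h.symm.trans ih
end

section
/- Let ħ > 0, let N ≥ 1 be an integer, let λ₁,…,λ_N ∈ ℂ, and set t(γ) = ∏_{k=1}^{N}(γ−λ_k). Let K : ℂ → ℂ satisfy K(γ−iħ) = K(γ) − K(γ+iħ)/(t(γ)·t(γ+iħ)) for all γ ∈ ℂ with t(γ)·t(γ+iħ) ≠ 0. Define d(γ) = ∏_{k=1}^{N} exp(−(iγ/ħ)·log ħ)·Γ(1 − i(γ−λ_k)/ħ) and c(γ) = K(γ)/d(γ). Then for every γ ∈ ℂ such that t(γ) ≠ 0, t(γ+iħ) ≠ 0, and such that for every k ∈ {1,…,N} and every m ∈ {−1,0,1} the number 1 − i(γ + imħ − λ_k)/ħ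 is not a nonpositive integer, one has t(γ)·c(γ) = i^{−N}·c(γ+iħ) + i^{N}·c(γ−iħ). -/
open Finset

/-- `t(γ) = ∏ₖ (γ - λₖ)`. -/
noncomputable def tPoly (N : ℕ) (lam : Fin N → ℂ) (γ : ℂ) : ℂ :=
  ∏ k : Fin N, (γ - lam k)

/-- The Gamma-product denominator `d(γ) = ∏ₖ ħ^{-iγ/ħ} Γ(1 - i(γ-λₖ)/ħ)` of
Gutzwiller's fundamental solution (fs). -/
noncomputable def gammaDenomPlus (hbar : ℝ) (N : ℕ) (lam : Fin N → ℂ) (γ : ℂ) : ℂ :=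
  ∏ k : Fin N, Complex.exp (-(Complex.I * γ / (hbar : ℂ)) * (Real.log hbar : ℂ)) *
    Complex.Gamma (1 - Complex.I * (γ - lam k) / (hbar : ℂ))

theorem gammaDenomPlus_shift (hbar : ℝ) (hhbar : 0 < hbar) (N : ℕ) (lam : Fin N → ℂ) (γ : ℂ)
    (ht : tPoly N lam (γ + Complex.I * (hbar : ℂ)) ≠ 0) :
    gammaDenomPlus hbar N lam (γ + Complex.I * (hbar : ℂ)) =
      (-Complex.I) ^ N * tPoly N lam (γ + Complex.I * (hbar : ℂ)) *
        gammaDenomPlus hbar N lam γ := by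
  have hh : (hbar : ℂ) ≠ 0 := by exact_mod_cast hhbar.ne'
  have hI : Complex.I * Complex.I = -1 := Complex.I_mul_I
  have hc : (-Complex.I) ^ N = ∏ _k : Fin N, (-Complex.I) := by simp
  unfold tPoly at ht
  rw [Finset.prod_ne_zero_iff] at ht
  unfold gammaDenomPlus tPoly
  rw [hc, ← Finset.prod_mul_distrib, ← Finset.prod_mul_distrib]
  refine Finset.prod_congr rfl fun k hk => ?_
  have hk' := ht k hk
  have e1 : Complex.exp (-(Complex.I * (γ + Complex.I * (hbar : ℂ)) / (hbar : ℂ)) *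
      (Real.log hbar : ℂ)) =
      Complex.exp (-(Complex.I * γ / (hbar : ℂ)) * (Real.log hbar : ℂ)) * hbar := by
    have : (hbar : ℂ) = Complex.exp (Real.log hbar : ℂ) := by
      rw [← Complex.ofReal_exp, Real.exp_log hhbar]
    conv_rhs => rw [mul_comm]; lhs; rw [this]
    rw [← Complex.exp_add]
    congr 1
    field_simp
    linear_combination (-(hbar : ℂ) * (Real.log hbar : ℂ)) * hI
  have hs : (hbar : ℂ) * (1 - Complex.I * (γ - lam k) / (hbar : ℂ)) =
      -Complex.I * (γ + Complex.I * (hbar : ℂ) - lam k) := by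
    field_simp
    linear_combination (hbar : ℂ) * hI
  have hs0 : (1 - Complex.I * (γ - lam k) / (hbar : ℂ)) ≠ 0 := by
    intro h0
    rw [h0, mul_zero] at hs
    exact mul_ne_zero (neg_ne_zero.mpr Complex.I_ne_zero) hk' hs.symm
  have e2 : 1 - Complex.I * (γ + Complex.I * (hbar : ℂ) - lam k) / (hbar : ℂ) =
      (1 - Complex.I * (γ - lam k) / (hbar : ℂ)) + 1 := by
    field_simp
    linear_combination (-(hbar : ℂ)) * hI
  rw [e1, e2, Complex.Gamma_add_one _ hs0, ← hs]
  ring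

/-- Gutzwiller's fundamental solution `c₊ = K₊/d` of the one-dimensional Baxter
equation (fb2), given any function `K₊` satisfying the first recursion (ab1a). -/
theorem gutzwiller_solution_plus (hbar : ℝ) (hhbar : 0 < hbar) (N : ℕ) (hN : 1 ≤ N)
    (lam : Fin N → ℂ) (K : ℂ → ℂ)
    (hK : ∀ γ : ℂ, tPoly N lam γ * tPoly N lam (γ + Complex.I * (hbar : ℂ)) ≠ 0 →
      K (γ - Complex.I * (hbar : ℂ)) = K γ -
        K (γ + Complex.I * (hbar : ℂ)) /
          (tPoly N lam γ * tPoly N lam (γ + Complex.I * (hbar : ℂ)))) :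
    ∀ γ : ℂ, tPoly N lam γ ≠ 0 → tPoly N lam (γ + Complex.I * (hbar : ℂ)) ≠ 0 →
      (∀ k : Fin N, ∀ m : ℤ, m ∈ ({-1, 0, 1} : Set ℤ) → ∀ n : ℕ,
        1 - Complex.I * (γ + (m : ℂ) * (Complex.I * (hbar : ℂ)) - lam k) / (hbar : ℂ)
          ≠ -(n : ℂ)) →
      tPoly N lam γ * (K γ / gammaDenomPlus hbar N lam γ)
        = Complex.I ^ (-(N : ℤ)) *
            (K (γ + Complex.I * (hbar : ℂ)) /
              gammaDenomPlus hbar N lam (γ + Complex.I * (hbar : ℂ))) +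
          Complex.I ^ (N : ℤ) *
            (K (γ - Complex.I * (hbar : ℂ)) /
              gammaDenomPlus hbar N lam (γ - Complex.I * (hbar : ℂ))) := by
  intro γ ht ht1 hreg
  have h1 := gammaDenomPlus_shift hbar hhbar N lam γ ht1
  have h2 := gammaDenomPlus_shift hbar hhbar N lam (γ - Complex.I * (hbar : ℂ))
    (by rw [sub_add_cancel]; exact ht)
  rw [sub_add_cancel] at h2
  have hII : Complex.I ^ N * (-Complex.I) ^ N = 1 := by
    rw [← mul_pow]; simp
  have hIN : Complex.I ^ N ≠ 0 := pow_ne_zero _ Complex.I_ne_zero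
  have hInv : (-Complex.I) ^ N = (Complex.I ^ N)⁻¹ := eq_inv_of_mul_eq_one_right hII
  rw [hK γ (mul_ne_zero ht ht1), h1, h2, hInv, zpow_neg, zpow_natCast]
  by_cases hd : gammaDenomPlus hbar N lam (γ - Complex.I * (hbar : ℂ)) = 0
  · simp [hd]
  · field_simp
    ring
end

section
/- Let ħ > 0, let N ≥ 1 be an integer, let λ₁,…,λ_N ∈ ℂ, and set t(γ) = ∏_{k=1}^{N}(γ−λ_k). Let K : ℂ → ℂ satisfy K(γ+iħ) = K(γ) − K(γ−iħ)/(t(γ)·t(γ−iħ)) for all γ ∈ ℂ with t(γ)·t(γ−iħ) ≠ 0. Define d(γ) = ∏_{k=1}^{N} exp((iγ/ħ)·log ħ)·Γ(1 + i(γ−λ_k)/ħ) and c(γ) = K(γ)/d(γ). Then for every γ ∈ ℂ such that t(γ) ≠ 0, t(γ−iħ) ≠ 0, and such that for every k ∈ {1,…,N} and every m ∈ {−1,0,1} the number 1 + i(γ + imħ − λ_k)/ħ is not a nonpositive integer, one has t(γ)·c(γ) = i^{−N}·c(γ+iħ) + i^{N}·c(γ−iħ). -/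
open Finset

/-- The Gamma-product denominator `d(γ) = ∏ₖ ħ^{iγ/ħ} Γ(1 + i(γ-λₖ)/ħ)` of
Gutzwiller's second fundamental solution (fs). -/
noncomputable def gammaDenomMinus (hbar : ℝ) (N : ℕ) (lam : Fin N → ℂ) (γ : ℂ) : ℂ :=
  ∏ k : Fin N, Complex.exp ((Complex.I * γ / (hbar : ℂ)) * (Real.log hbar : ℂ)) *
    Complex.Gamma (1 + Complex.I * (γ - lam k) / (hbar : ℂ))

lemma gammaDenomMinus_step (hbar : ℝ) (hhbar : 0 < hbar) (N : ℕ) (lam : Fin N → ℂ) (γ : ℂ)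
    (ht : tPoly N lam γ ≠ 0) :
    gammaDenomMinus hbar N lam γ = Complex.I ^ N * tPoly N lam γ *
      gammaDenomMinus hbar N lam (γ + Complex.I * (hbar : ℂ)) := by
  have hh : (hbar : ℂ) ≠ 0 := by exact_mod_cast hhbar.ne'
  have hc : Complex.I ^ N = ∏ _k : Fin N, Complex.I := by simp
  unfold tPoly at ht
  rw [Finset.prod_ne_zero_iff] at ht
  unfold gammaDenomMinus tPoly
  rw [hc, ← Finset.prod_mul_distrib, ← Finset.prod_mul_distrib]
  refine Finset.prod_congr rfl fun k hk => ?_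
  have h1 : γ - lam k ≠ 0 := ht k hk
  have e1 : Complex.I * (γ + Complex.I * (hbar : ℂ)) / (hbar : ℂ)
      = Complex.I * γ / (hbar : ℂ) - 1 := by
    field_simp
    linear_combination (hbar : ℂ) * Complex.I_sq
  have e2 : 1 + Complex.I * (γ + Complex.I * (hbar : ℂ) - lam k) / (hbar : ℂ)
      = Complex.I * (γ - lam k) / (hbar : ℂ) := by
    field_simp
    linear_combination (hbar : ℂ) * Complex.I_sq
  have e3 : Complex.exp (Real.log hbar : ℂ) = (hbar : ℂ) := by
    rw [← Complex.ofReal_exp, Real.exp_log hhbar]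
  rw [e1, e2, add_comm (1 : ℂ), Complex.Gamma_add_one _
    (div_ne_zero (mul_ne_zero Complex.I_ne_zero h1) hh), sub_mul, one_mul, Complex.exp_sub, e3]
  field_simp

/-- Gutzwiller's second fundamental solution `c₋ = K₋/d` of the one-dimensional
Baxter equation (fb2), given any function `K₋` satisfying the second recursion
of (ab1a). -/
theorem gutzwiller_solution_minus (hbar : ℝ) (hhbar : 0 < hbar) (N : ℕ) (hN : 1 ≤ N)
    (lam : Fin N → ℂ) (K : ℂ → ℂ)
    (hK : ∀ γ : ℂ, tPoly N lam γ * tPoly N lam (γ - Complex.I * (hbar : ℂ)) ≠ 0 →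
      K (γ + Complex.I * (hbar : ℂ)) = K γ -
        K (γ - Complex.I * (hbar : ℂ)) /
          (tPoly N lam γ * tPoly N lam (γ - Complex.I * (hbar : ℂ)))) :
    ∀ γ : ℂ, tPoly N lam γ ≠ 0 → tPoly N lam (γ - Complex.I * (hbar : ℂ)) ≠ 0 →
      (∀ k : Fin N, ∀ m : ℤ, m ∈ ({-1, 0, 1} : Set ℤ) → ∀ n : ℕ,
        1 + Complex.I * (γ + (m : ℂ) * (Complex.I * (hbar : ℂ)) - lam k) / (hbar : ℂ)
          ≠ -(n : ℂ)) →
      tPoly N lam γ * (K γ / gammaDenomMinus hbar N lam γ)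
        = Complex.I ^ (-(N : ℤ)) *
            (K (γ + Complex.I * (hbar : ℂ)) /
              gammaDenomMinus hbar N lam (γ + Complex.I * (hbar : ℂ))) +
          Complex.I ^ (N : ℤ) *
            (K (γ - Complex.I * (hbar : ℂ)) /
              gammaDenomMinus hbar N lam (γ - Complex.I * (hbar : ℂ))) := by
  intro γ h0 h1 _
  have hk := hK γ (mul_ne_zero h0 h1)
  have d0 := gammaDenomMinus_step hbar hhbar N lam γ h0
  have d1 := gammaDenomMinus_step hbar hhbar N lam _ h1
  rw [sub_add_cancel] at d1
  have hI : Complex.I ^ N ≠ 0 := pow_ne_zero _ Complex.I_ne_zero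
  rw [d1, d0, hk, zpow_neg, zpow_natCast]
  by_cases hd : gammaDenomMinus hbar N lam (γ + Complex.I * (hbar : ℂ)) = 0
  · simp [hd]
  · field_simp
    ring
end

section
/- Let ħ > 0, let N ≥ 1 be an integer, let t : ℂ → ℂ, let δ₁,…,δ_N be pairwise distinct real numbers, let ξ ∈ ℂ, and let c₊, c₋ : ℂ → ℂ be entire functions satisfying t(γ)·c(γ) = i^{−N}·c(γ+iħ) + i^{N}·c(γ−iħ) for all γ ∈ ℂ. Assume the quantization conditions c₊(δ_k + iħn) = ξ·c₋(δ_k + iħn) for all k ∈ {1,…,N} and all n ∈ ℤ. Then there exists an entire function C : ℂ → ℂ such that C(γ)·∏_{k=1}^{N} sinh(π(γ−δ_k)/ħ) = c₊(γ) − ξ·c₋(γ) for all γ ∈ ℂ, and t(γ)·C(γ) = i^{N}·C(γ+iħ) + i^{−N}·C(γ−iħ) for every γ with ∏_{k=1}^{N} sinh(π(γ−δ_k)/ħ) ≠ 0. -/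
open Finset

/-- The denominator `∏ₖ sinh(π(γ-δₖ)/ħ)` of the Pasquier-Gaudin solution. -/
noncomputable def sinhProd (hbar : ℝ) (N : ℕ) (δ : Fin N → ℝ) (γ : ℂ) : ℂ :=
  ∏ k : Fin N, Complex.sinh ((Real.pi : ℂ) * (γ - (δ k : ℂ)) / (hbar : ℂ))

lemma entire_quot (f S : ℂ → ℂ) (hf : Differentiable ℂ f) (hS : Differentiable ℂ S)
    (h0 : ∀ z, S z = 0 → f z = 0 ∧ deriv S z ≠ 0) :
    ∃ C : ℂ → ℂ, Differentiable ℂ C ∧ ∀ z, C z * S z = f z := by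
  classical
  refine ⟨fun z => if S z = 0 then deriv f z / deriv S z else f z / S z, ?_, ?_⟩
  · intro z0
    have dd : ∀ g : ℂ → ℂ, Differentiable ℂ g → DifferentiableAt ℂ (dslope g z0) z0 := by
      intro g hg
      have := (Complex.differentiableOn_dslope (f := g) (c := z0) (s := Set.univ)
        Filter.univ_mem).2 hg.differentiableOn
      exact this.differentiableAt Filter.univ_mem
    by_cases hz : S z0 = 0
    · obtain ⟨hf0, hd⟩ := h0 z0 hz
      have hne : dslope S z0 z0 ≠ 0 := by rwa [dslope_same]
      refine ((dd f hf).div (dd S hS) hne).congr_of_eventuallyEq ?_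
      filter_upwards [(dd S hS).continuousAt.eventually_ne hne] with z hz1
      by_cases hzz : z = z0
      · subst hzz
        simp [hz, dslope_same]
      · have hsub : z - z0 ≠ 0 := sub_ne_zero.2 hzz
        simp only [Pi.div_apply, dslope_of_ne _ hzz, slope_def_field, hz, hf0, sub_zero] at hz1 ⊢
        have hSz : S z ≠ 0 := fun h => hz1 (by simp [h])
        rw [if_neg hSz]
        field_simp
    · refine ((hf z0).div (hS z0) hz).congr_of_eventuallyEq ?_
      filter_upwards [(hS z0).continuousAt.eventually_ne hz] with z hz1
      simp [hz1]
  · intro z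
    by_cases hz : S z = 0
    · simp [hz, (h0 z hz).1]
    · simp [hz]

lemma sinh_zero (z : ℂ) (h : Complex.sinh z = 0) : ∃ n : ℤ, z = n * Real.pi * Complex.I := by
  have h1 : Complex.sin (z * Complex.I) = 0 := by rw [Complex.sin_mul_I, h, zero_mul]
  obtain ⟨n, hn⟩ := Complex.sin_eq_zero_iff.1 h1
  refine ⟨-n, ?_⟩
  push_cast
  linear_combination (-Complex.I) * hn + z * Complex.I_sq

lemma factor_zero (hbar : ℝ) (hhbar : 0 < hbar) (d : ℝ) (z : ℂ)
    (h : Complex.sinh ((Real.pi : ℂ) * (z - (d : ℂ)) / (hbar : ℂ)) = 0) :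
    ∃ n : ℤ, z = d + Complex.I * hbar * n := by
  obtain ⟨n, hn⟩ := sinh_zero _ h
  refine ⟨n, ?_⟩
  have hb : (hbar : ℂ) ≠ 0 := by exact_mod_cast hhbar.ne'
  have hpi : (Real.pi : ℂ) ≠ 0 := by exact_mod_cast Real.pi_ne_zero
  rw [div_eq_iff hb] at hn
  apply mul_left_cancel₀ hpi
  linear_combination hn

lemma sinh_shift (hbar : ℝ) (hhbar : 0 < hbar) (d z : ℂ) :
    Complex.sinh ((Real.pi : ℂ) * (z + Complex.I * hbar - d) / (hbar : ℂ)) =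
      - Complex.sinh ((Real.pi : ℂ) * (z - d) / (hbar : ℂ)) := by
  have hb : (hbar : ℂ) ≠ 0 := by exact_mod_cast hhbar.ne'
  have : (Real.pi : ℂ) * (z + Complex.I * hbar - d) / (hbar : ℂ) =
    (Real.pi : ℂ) * (z - d) / (hbar : ℂ) + Real.pi * Complex.I := by field_simp; ring
  rw [this, Complex.sinh_add, Complex.sinh_mul_I, Complex.cosh_mul_I]
  simp

lemma prod_shift (hbar : ℝ) (hhbar : 0 < hbar) (N : ℕ) (δ : Fin N → ℝ) (z : ℂ) :
    sinhProd hbar N δ (z + Complex.I * hbar) = (-1) ^ N * sinhProd hbar N δ z := by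
  unfold sinhProd
  simp only [sinh_shift hbar hhbar]
  rw [Finset.prod_neg]
  simp

/-- The Pasquier-Gaudin construction (true1)/(pg2) combined with the pole-cancellation
conditions (q1): the quotient `(c₊ - ξc₋)/∏ sinh` extends to an entire solution of the
Baxter equation (fb1). -/
theorem pasquier_gaudin_entire_solution (hbar : ℝ) (hhbar : 0 < hbar)
    (N : ℕ) (hN : 1 ≤ N) (t : ℂ → ℂ) (δ : Fin N → ℝ)
    (hδ : Function.Injective δ) (ξ : ℂ) (cp cm : ℂ → ℂ)
    (hcp : Differentiable ℂ cp) (hcm : Differentiable ℂ cm)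
    (hp : ∀ γ : ℂ, t γ * cp γ =
      Complex.I ^ (-(N : ℤ)) * cp (γ + Complex.I * (hbar : ℂ)) +
      Complex.I ^ (N : ℤ) * cp (γ - Complex.I * (hbar : ℂ)))
    (hm : ∀ γ : ℂ, t γ * cm γ =
      Complex.I ^ (-(N : ℤ)) * cm (γ + Complex.I * (hbar : ℂ)) +
      Complex.I ^ (N : ℤ) * cm (γ - Complex.I * (hbar : ℂ)))
    (hq : ∀ k : Fin N, ∀ n : ℤ,
      cp ((δ k : ℂ) + Complex.I * (hbar : ℂ) * (n : ℂ)) =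
        ξ * cm ((δ k : ℂ) + Complex.I * (hbar : ℂ) * (n : ℂ))) :
    ∃ C : ℂ → ℂ, Differentiable ℂ C ∧
      (∀ γ : ℂ, C γ * sinhProd hbar N δ γ = cp γ - ξ * cm γ) ∧
      (∀ γ : ℂ, sinhProd hbar N δ γ ≠ 0 →
        t γ * C γ = Complex.I ^ (N : ℤ) * C (γ + Complex.I * (hbar : ℂ)) +
          Complex.I ^ (-(N : ℤ)) * C (γ - Complex.I * (hbar : ℂ))) := by
  have hb : (hbar : ℂ) ≠ 0 := by exact_mod_cast hhbar.ne'
  have hpi : (Real.pi : ℂ) ≠ 0 := by exact_mod_cast Real.pi_ne_zero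
  have hfac : ∀ k : Fin N, ∀ z : ℂ, HasDerivAt
      (fun γ : ℂ => Complex.sinh ((Real.pi : ℂ) * (γ - (δ k : ℂ)) / (hbar : ℂ)))
      (Complex.cosh ((Real.pi : ℂ) * (z - (δ k : ℂ)) / (hbar : ℂ)) * (Real.pi / hbar)) z := by
    intro k z
    have := ((((hasDerivAt_id z).sub_const (δ k : ℂ)).const_mul (Real.pi : ℂ)).div_const
      (hbar : ℂ)).csinh
    simpa using this
  have hS : Differentiable ℂ (sinhProd hbar N δ) := by
    have h := Differentiable.fun_finsetProd (𝕜 := ℂ) (u := Finset.univ)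
      (f := fun (k : Fin N) (γ : ℂ) =>
        Complex.sinh ((Real.pi : ℂ) * (γ - (δ k : ℂ)) / (hbar : ℂ)))
      (fun k _ z => (hfac k z).differentiableAt)
    exact h
  have h0 : ∀ z, sinhProd hbar N δ z = 0 →
      (cp z - ξ * cm z = 0 ∧ deriv (sinhProd hbar N δ) z ≠ 0) := by
    intro z hz
    obtain ⟨k, -, hk⟩ := Finset.prod_eq_zero_iff.1 hz
    obtain ⟨n, hn⟩ := factor_zero hbar hhbar _ _ hk
    refine ⟨by rw [hn, hq k n, sub_self], ?_⟩
    have hR : DifferentiableAt ℂ (fun γ : ℂ => ∏ j ∈ Finset.univ.erase k,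
        Complex.sinh ((Real.pi : ℂ) * (γ - (δ j : ℂ)) / (hbar : ℂ))) z := by
      exact DifferentiableAt.fun_finsetProd (fun j _ => (hfac j z).differentiableAt)
    have heq : sinhProd hbar N δ = fun γ : ℂ =>
        Complex.sinh ((Real.pi : ℂ) * (γ - (δ k : ℂ)) / (hbar : ℂ)) *
        ∏ j ∈ Finset.univ.erase k,
          Complex.sinh ((Real.pi : ℂ) * (γ - (δ j : ℂ)) / (hbar : ℂ)) := by
      funext γ
      exact (Finset.mul_prod_erase _ _ (Finset.mem_univ k)).symm
    rw [heq, ((hfac k z).fun_mul hR.hasDerivAt).deriv, hk, zero_mul, add_zero]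
    refine mul_ne_zero (mul_ne_zero ?_ (div_ne_zero hpi hb)) ?_
    · intro hc
      have := Complex.cosh_sq_sub_sinh_sq ((Real.pi : ℂ) * (z - (δ k : ℂ)) / (hbar : ℂ))
      rw [hc, hk] at this
      norm_num at this
    · rw [Finset.prod_ne_zero_iff]
      intro j hj hj0
      obtain ⟨m, hm'⟩ := factor_zero hbar hhbar _ _ hj0
      apply (Finset.mem_erase.1 hj).1
      apply hδ
      have := congrArg Complex.re (hn.symm.trans hm')
      simp at this
      exact this.symm
  obtain ⟨C, hC, hCS⟩ := entire_quot (fun z => cp z - ξ * cm z) _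
    (hcp.sub (hcm.const_mul ξ)) hS h0
  refine ⟨C, hC, hCS, ?_⟩
  intro γ hγ
  apply mul_right_cancel₀ hγ
  have e1 := hCS (γ + Complex.I * hbar)
  have e2 := hCS (γ - Complex.I * hbar)
  have e0 := hCS γ
  have s1 := prod_shift hbar hhbar N δ γ
  have s2 := prod_shift hbar hhbar N δ (γ - Complex.I * hbar)
  rw [sub_add_cancel] at s2
  have hI : (Complex.I ^ (-(N : ℤ)) : ℂ) = (-1) ^ N * Complex.I ^ (N : ℤ) := by
    rw [zpow_neg, zpow_natCast, ← inv_pow, Complex.inv_I, neg_pow]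
  have hsq : ((-1 : ℂ) ^ N) * (-1) ^ N = 1 := by rw [← mul_pow]; simp
  have hp' := hp γ
  have hm' := hm γ
  rw [hI] at hp' hm' ⊢
  rw [s1] at e1
  generalize sinhProd hbar N δ γ = S at *
  generalize sinhProd hbar N δ (γ - Complex.I * hbar) = S' at *
  generalize ((-1 : ℂ) ^ N) = e at *
  generalize (Complex.I ^ (N : ℤ)) = w at *
  subst s2
  linear_combination t γ * e0 + hp' - ξ * hm' - e * w * e1 - w * e2 + (w * C (γ + Complex.I * hbar) * (e * S') - w * C (γ - Complex.I * hbar) * S') * hsq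
end
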